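/- Let 0 → C →f E →g M → 0 be a non-abelian extension of λ-weighted Rota-Baxter Lie coalgebras with retraction t and induced non-abelian 2-cocycle (h, ρ, φ). Let Aut_C(E) = {γ ∈ Aut(E) : γ(C) = C}, let K : Aut_C(E) → Aut(C)×Aut(M) be given by K(γ) = (α, β) with α(c) = tγf(c) and β(g(e)) = gγ(e), and let Aut_C^M(E) = {γ ∈ Aut_C(E) : K(γ) = (I_C, I_M)}. Then the sequence 1 → Aut_C^M(E) → Aut_C(E) →K Aut(C)×Aut(M) →W H²_nab(M,C) is exact: the inclusion is injective with image equal to Ker K, and a pair (α, β) lies in the image of K if and only if W(α, β) = 0, i.e. if and only if the cocycles (h_{(α,β)}, ρ_{(α,β)}, φ_{(α,β)}) and (h, ρ, φ) are equivalent. -/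

import Mathlib

open TensorProduct LinearMap

section

variable {k : Type*} [Field k]
variable {C : Type*} [AddCommGroup C] [Module k C]
variable {M : Type*} [AddCommGroup M] [Module k M]
variable {E : Type*} [AddCommGroup E] [Module k E]

/-- Co-antisymmetry of a cobracket: `Δ = -τΔ`. -/
def CoAnti (Δ : C →ₗ[k] C ⊗[k] C) : Prop :=
  Δ = -((TensorProduct.comm k C C).toLinearMap ∘ₗ Δ)

/-- The co-Jacobi identity `(I⊗Δ)Δ - (Δ⊗I)Δ + (I⊗τ)(Δ⊗I)Δ = 0`. -/
def CoJacobi (Δ : C →ₗ[k] C ⊗[k] C) : Prop :=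
  lTensor C Δ ∘ₗ Δ
    - (TensorProduct.assoc k C C C).toLinearMap ∘ₗ rTensor C Δ ∘ₗ Δ
    + lTensor C (TensorProduct.comm k C C).toLinearMap ∘ₗ
        (TensorProduct.assoc k C C C).toLinearMap ∘ₗ rTensor C Δ ∘ₗ Δ = 0

/-- `(R⊗R)Δ = (I⊗R + R⊗I + λI) Δ R`. -/
def IsRBO (lam : k) (Δ : C →ₗ[k] C ⊗[k] C) (R : C →ₗ[k] C) : Prop :=
  TensorProduct.map R R ∘ₗ Δ
    = (lTensor C R + rTensor C R + lam • (LinearMap.id : C ⊗[k] C →ₗ[k] C ⊗[k] C)) ∘ₗ Δ ∘ₗ R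

/-- `λ`-weighted Rota-Baxter Lie coalgebra. -/
def IsRBLC (lam : k) (Δ : C →ₗ[k] C ⊗[k] C) (R : C →ₗ[k] C) : Prop :=
  CoAnti Δ ∧ CoJacobi Δ ∧ IsRBO lam Δ R

/-- Homomorphism of `λ`-weighted Rota-Baxter Lie coalgebras:
`(θ⊗θ)Δ_C = Δ_E θ` and `R_E θ = θ R_C`. -/
def IsHom (ΔC : C →ₗ[k] C ⊗[k] C) (RC : C →ₗ[k] C)
    (ΔE : E →ₗ[k] E ⊗[k] E) (RE : E →ₗ[k] E) (θ : C →ₗ[k] E) : Prop :=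
  TensorProduct.map θ θ ∘ₗ ΔC = ΔE ∘ₗ θ ∧ RE ∘ₗ θ = θ ∘ₗ RC

/-- Non-abelian 2-cocycle `(h, ρ, φ)` on `(C, Δ_C, R_C)` with values in `(M, Δ_M, R_M)`. -/
def NA2Cocycle (lam : k) (ΔC : C →ₗ[k] C ⊗[k] C) (RC : C →ₗ[k] C)
    (ΔM : M →ₗ[k] M ⊗[k] M) (RM : M →ₗ[k] M)
    (h : M →ₗ[k] C ⊗[k] C) (ρ : M →ₗ[k] M ⊗[k] C) (φ : M →ₗ[k] C) : Prop :=
  -- (1)  τh + h = 0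
  ((TensorProduct.comm k C C).toLinearMap ∘ₗ h + h = 0) ∧
  -- (2)  (I⊗Δ_C)h − (Δ_C⊗I)h + (I⊗τ)(Δ_C⊗I)h = (h⊗I)ρ + (I⊗h)τρ − (I⊗τ)(h⊗I)ρ
  (lTensor C ΔC ∘ₗ h
      - (TensorProduct.assoc k C C C).toLinearMap ∘ₗ rTensor C ΔC ∘ₗ h
      + lTensor C (TensorProduct.comm k C C).toLinearMap ∘ₗ
          (TensorProduct.assoc k C C C).toLinearMap ∘ₗ rTensor C ΔC ∘ₗ h
    = (TensorProduct.assoc k C C C).toLinearMap ∘ₗ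
        TensorProduct.map h (LinearMap.id : C →ₗ[k] C) ∘ₗ ρ
      + lTensor C h ∘ₗ (TensorProduct.comm k M C).toLinearMap ∘ₗ ρ
      - lTensor C (TensorProduct.comm k C C).toLinearMap ∘ₗ
          (TensorProduct.assoc k C C C).toLinearMap ∘ₗ
          TensorProduct.map h (LinearMap.id : C →ₗ[k] C) ∘ₗ ρ) ∧
  -- (3)  (I⊗Δ_C)ρ + (I⊗h)Δ_M = (ρ⊗I)ρ − (I⊗τ)(ρ⊗I)ρ
  (lTensor M ΔC ∘ₗ ρ + lTensor M h ∘ₗ ΔM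
    = (TensorProduct.assoc k M C C).toLinearMap ∘ₗ rTensor C ρ ∘ₗ ρ
      - lTensor M (TensorProduct.comm k C C).toLinearMap ∘ₗ
          (TensorProduct.assoc k M C C).toLinearMap ∘ₗ rTensor C ρ ∘ₗ ρ) ∧
  -- (4)  (Δ_M⊗I)ρ = (I⊗τ)(ρ⊗I)Δ_M + (I⊗ρ)Δ_M
  ((TensorProduct.assoc k M M C).toLinearMap ∘ₗ rTensor C ΔM ∘ₗ ρ
    = lTensor M (TensorProduct.comm k C M).toLinearMap ∘ₗ
        (TensorProduct.assoc k M C M).toLinearMap ∘ₗ rTensor M ρ ∘ₗ ΔM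
      + lTensor M ρ ∘ₗ ΔM) ∧
  -- (5)
  (TensorProduct.map φ RC ∘ₗ ρ
      - TensorProduct.map RC φ ∘ₗ (TensorProduct.comm k M C).toLinearMap ∘ₗ ρ
      - TensorProduct.map φ (LinearMap.id : C →ₗ[k] C) ∘ₗ ρ ∘ₗ RM
      + lTensor C φ ∘ₗ (TensorProduct.comm k M C).toLinearMap ∘ₗ ρ ∘ₗ RM
      + TensorProduct.map φ φ ∘ₗ ΔM
      - (lTensor C RC + rTensor C RC
          + lam • (LinearMap.id : C ⊗[k] C →ₗ[k] C ⊗[k] C)) ∘ₗ ΔC ∘ₗ φ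
    = (rTensor C RC + lTensor C RC
        + lam • (LinearMap.id : C ⊗[k] C →ₗ[k] C ⊗[k] C)) ∘ₗ h ∘ₗ RM
      - TensorProduct.map RC RC ∘ₗ h) ∧
  -- (6)  (R_M⊗φ)Δ_M + (R_M⊗R_C)ρ = (I⊗φ)Δ_M R_M + (I⊗R_C + R_M⊗I + λ)ρR_M
  (TensorProduct.map RM φ ∘ₗ ΔM + TensorProduct.map RM RC ∘ₗ ρ
    = lTensor M φ ∘ₗ ΔM ∘ₗ RM
      + (lTensor M RC + rTensor C RM
          + lam • (LinearMap.id : M ⊗[k] C →ₗ[k] M ⊗[k] C)) ∘ₗ ρ ∘ₗ RM)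

/-- The cobracket `Δ_{(h,ρ)}` on `C ⊕ M`. -/
noncomputable def prodCobra (ΔC : C →ₗ[k] C ⊗[k] C) (ΔM : M →ₗ[k] M ⊗[k] M)
    (h : M →ₗ[k] C ⊗[k] C) (ρ : M →ₗ[k] M ⊗[k] C) :
    (C × M) →ₗ[k] (C × M) ⊗[k] (C × M) :=
  TensorProduct.map (LinearMap.inl k C M) (LinearMap.inl k C M) ∘ₗ
      (ΔC ∘ₗ LinearMap.fst k C M + h ∘ₗ LinearMap.snd k C M)
    + TensorProduct.map (LinearMap.inr k C M) (LinearMap.inr k C M) ∘ₗ ΔM ∘ₗ LinearMap.snd k C M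
    + TensorProduct.map (LinearMap.inr k C M) (LinearMap.inl k C M) ∘ₗ ρ ∘ₗ LinearMap.snd k C M
    - TensorProduct.map (LinearMap.inl k C M) (LinearMap.inr k C M) ∘ₗ
        (TensorProduct.comm k M C).toLinearMap ∘ₗ ρ ∘ₗ LinearMap.snd k C M

/-- The operator `R_φ` on `C ⊕ M`. -/
def prodRB (RC : C →ₗ[k] C) (RM : M →ₗ[k] M) (φ : M →ₗ[k] C) :
    (C × M) →ₗ[k] (C × M) :=
  LinearMap.inl k C M ∘ₗ (RC ∘ₗ LinearMap.fst k C M + φ ∘ₗ LinearMap.snd k C M)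
    + LinearMap.inr k C M ∘ₗ RM ∘ₗ LinearMap.snd k C M

/-- `(α,β)` is extensible with respect to the non-abelian extension
`0 → C →f E →g M → 0`. -/
def Extensible (ΔE : E →ₗ[k] E ⊗[k] E) (RE : E →ₗ[k] E)
    (f : C →ₗ[k] E) (g : E →ₗ[k] M) (α : C →ₗ[k] C) (β : M →ₗ[k] M) : Prop :=
  ∃ γ : E →ₗ[k] E, IsHom ΔE RE ΔE RE γ ∧ Function.Bijective γ ∧
    Submodule.map γ (LinearMap.range f) = LinearMap.range f ∧
    γ ∘ₗ f = f ∘ₗ α ∧ g ∘ₗ γ = β ∘ₗ g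

/-- `(h', ρ', φ')` differs from `(h, ρ, φ)` by the equivalence move associated to
the linear map `s : M → C`. -/
def EquivVia (ΔC : C →ₗ[k] C ⊗[k] C) (RC : C →ₗ[k] C)
    (ΔM : M →ₗ[k] M ⊗[k] M) (RM : M →ₗ[k] M) (s : M →ₗ[k] C)
    (h : M →ₗ[k] C ⊗[k] C) (ρ : M →ₗ[k] M ⊗[k] C) (φ : M →ₗ[k] C)
    (h' : M →ₗ[k] C ⊗[k] C) (ρ' : M →ₗ[k] M ⊗[k] C) (φ' : M →ₗ[k] C) : Prop :=
  h' - h = TensorProduct.map s (LinearMap.id : C →ₗ[k] C) ∘ₗ ρ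
      - (TensorProduct.comm k C C).toLinearMap ∘ₗ
          TensorProduct.map s (LinearMap.id : C →ₗ[k] C) ∘ₗ ρ
      + TensorProduct.map s s ∘ₗ ΔM - ΔC ∘ₗ s ∧
  ρ' - ρ = lTensor M s ∘ₗ ΔM ∧
  φ' - φ = s ∘ₗ RM - RC ∘ₗ s

/-- Two non-abelian 2-cocycles are equivalent. -/
def CocEquiv (ΔC : C →ₗ[k] C ⊗[k] C) (RC : C →ₗ[k] C)
    (ΔM : M →ₗ[k] M ⊗[k] M) (RM : M →ₗ[k] M)
    (h : M →ₗ[k] C ⊗[k] C) (ρ : M →ₗ[k] M ⊗[k] C) (φ : M →ₗ[k] C)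
    (h' : M →ₗ[k] C ⊗[k] C) (ρ' : M →ₗ[k] M ⊗[k] C) (φ' : M →ₗ[k] C) : Prop :=
  ∃ s : M →ₗ[k] C, EquivVia ΔC RC ΔM RM s h ρ φ h' ρ' φ'


/-- A linear map vanishing on the kernel of a surjection factors through it. -/
theorem aux_factor {X : Type*} [AddCommGroup X] [Module k X]
    (g : E →ₗ[k] M) (surjg : Function.Surjective g)
    (p : E →ₗ[k] X) (hp : ∀ e, g e = 0 → p e = 0) : ∃ q : M →ₗ[k] X, ∀ e, q (g e) = p e := by
  obtain ⟨σ, hσ⟩ := g.exists_rightInverse_of_surjective (LinearMap.range_eq_top.2 surjg)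
  refine ⟨p ∘ₗ σ, fun e => ?_⟩
  have h1 : g (σ (g e) - e) = 0 := by
    rw [map_sub, sub_eq_zero]
    exact LinearMap.congr_fun hσ (g e)
  have h2 := hp _ h1
  rw [map_sub, sub_eq_zero] at h2
  exact h2

/-- Joint injectivity of the four projections on `E ⊗ E`. -/
theorem aux_joint (f : C →ₗ[k] E) (g : E →ₗ[k] M) (t : E →ₗ[k] C) (i : M →ₗ[k] E)
    (hi : ∀ e, f (t e) + i (g e) = e) (x y : E ⊗[k] E)
    (h1 : TensorProduct.map t t x = TensorProduct.map t t y)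
    (h2 : TensorProduct.map g t x = TensorProduct.map g t y)
    (h3 : TensorProduct.map t g x = TensorProduct.map t g y)
    (h4 : TensorProduct.map g g x = TensorProduct.map g g y) : x = y := by
  have hid : f ∘ₗ t + i ∘ₗ g = LinearMap.id := LinearMap.ext hi
  have key : ∀ z : E ⊗[k] E, z =
      TensorProduct.map f f (TensorProduct.map t t z)
      + TensorProduct.map i f (TensorProduct.map g t z)
      + (TensorProduct.map f i (TensorProduct.map t g z)
      + TensorProduct.map i i (TensorProduct.map g g z)) := by
    intro z
    conv_lhs => rw [← LinearMap.id_apply (R := k) z, ← TensorProduct.map_id, ← hid,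
      TensorProduct.map_add_right, TensorProduct.map_add_left, TensorProduct.map_add_left]
    simp only [TensorProduct.map_comp, LinearMap.add_apply, LinearMap.comp_apply]
  rw [key x, key y, h1, h2, h3, h4]

/-- The key computation. -/
theorem aux_key (ΔC : C →ₗ[k] C ⊗[k] C) (RC : C →ₗ[k] C)
    (ΔM : M →ₗ[k] M ⊗[k] M) (RM : M →ₗ[k] M)
    (ΔE : E →ₗ[k] E ⊗[k] E) (RE : E →ₗ[k] E)
    (hE : CoAnti ΔE)
    (f : C →ₗ[k] E) (g : E →ₗ[k] M)
    (homg : IsHom ΔE RE ΔM RM g)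
    (surjg : Function.Surjective g)
    (t : E →ₗ[k] C)
    (i : M →ₗ[k] E) (hi : ∀ e, f (t e) + i (g e) = e)
    (h : M →ₗ[k] C ⊗[k] C) (ρ : M →ₗ[k] M ⊗[k] C) (φ : M →ₗ[k] C)
    (hh : h ∘ₗ g = TensorProduct.map t t ∘ₗ ΔE - ΔC ∘ₗ t)
    (hρ : ρ ∘ₗ g = TensorProduct.map g t ∘ₗ ΔE)
    (hφ : φ ∘ₗ g = t ∘ₗ RE - RC ∘ₗ t)
    (α : C →ₗ[k] C) (β : M →ₗ[k] M)
    (hα : IsHom ΔC RC ΔC RC α) (hβ : IsHom ΔM RM ΔM RM β)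
    (β' : M →ₗ[k] M) (hb1 : β ∘ₗ β' = LinearMap.id) (hb2 : β' ∘ₗ β = LinearMap.id)
    (s : M →ₗ[k] C) (γ : E →ₗ[k] E) (hgγ : g ∘ₗ γ = β ∘ₗ g)
    (htγ : t ∘ₗ γ = α ∘ₗ t + (s ∘ₗ β) ∘ₗ g) :
    IsHom ΔE RE ΔE RE γ ↔ EquivVia ΔC RC ΔM RM s
          (TensorProduct.map α α ∘ₗ h ∘ₗ β')
          (TensorProduct.map β α ∘ₗ ρ ∘ₗ β')
          (α ∘ₗ φ ∘ₗ β')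
          h ρ φ := by
  have hb2' : ∀ m, β' (β m) = m := fun m => LinearMap.congr_fun hb2 m
  have hb1' : ∀ m, β (β' m) = m := fun m => LinearMap.congr_fun hb1 m
  have ett : ∀ e, TensorProduct.map t t (ΔE e) = h (g e) + ΔC (t e) := fun e => by
    have := LinearMap.congr_fun hh e
    simp only [LinearMap.comp_apply, LinearMap.sub_apply] at this
    rw [this]; abel
  have egt : ∀ e, TensorProduct.map g t (ΔE e) = ρ (g e) :=
    fun e => (LinearMap.congr_fun hρ e).symm
  have egg : ∀ e, TensorProduct.map g g (ΔE e) = ΔM (g e) :=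
    fun e => LinearMap.congr_fun homg.1 e
  have eanti : ∀ e, ΔE e = -(TensorProduct.comm k E E (ΔE e)) :=
    fun e => LinearMap.congr_fun hE e
  have etg : ∀ e, TensorProduct.map t g (ΔE e) = -(TensorProduct.comm k M C (ρ (g e))) :=
    fun e => by
      rw [eanti, map_neg, ← egt]
      exact congrArg Neg.neg (TensorProduct.map_comm t g (ΔE e))
  have etR : ∀ e, t (RE e) = φ (g e) + RC (t e) := fun e => by
    have := LinearMap.congr_fun hφ e
    simp only [LinearMap.comp_apply, LinearMap.sub_apply] at this
    rw [this]; abel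
  have egR : ∀ e, g (RE e) = RM (g e) := fun e => (LinearMap.congr_fun homg.2 e).symm
  have eg : ∀ e, g (γ e) = β (g e) := fun e => LinearMap.congr_fun hgγ e
  have et : ∀ e, t (γ e) = α (t e) + s (β (g e)) := fun e => LinearMap.congr_fun htγ e
  have eα : ∀ c, TensorProduct.map α α (ΔC c) = ΔC (α c) := LinearMap.congr_fun hα.1
  have eβ : ∀ c, TensorProduct.map β β (ΔM c) = ΔM (β c) := LinearMap.congr_fun hβ.1
  have eαR : ∀ c, RC (α c) = α (RC c) := LinearMap.congr_fun hα.2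
  have eβR : ∀ c, RM (β c) = β (RM c) := LinearMap.congr_fun hβ.2
  -- projections of `(γ ⊗ γ) Δ`
  have ptt : ∀ e, TensorProduct.map t t (TensorProduct.map γ γ (ΔE e)) =
      TensorProduct.map α α (h (g e)) + ΔC (α (t e))
      + TensorProduct.map s LinearMap.id (TensorProduct.map β α (ρ (g e)))
      - TensorProduct.comm k C C
          (TensorProduct.map s LinearMap.id (TensorProduct.map β α (ρ (g e))))
      + TensorProduct.map s s (ΔM (β (g e))) := fun e => by
    have h1 : ∀ z : M ⊗[k] C, TensorProduct.comm k C C (TensorProduct.map s LinearMap.id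
        (TensorProduct.map β α z)) = TensorProduct.map α (s ∘ₗ β)
          (TensorProduct.comm k M C z) := fun z => by
      induction z with
      | zero => simp
      | tmul a b => simp
      | add a b ha hb => simp only [map_add, ha, hb]
    have h2 : ∀ z : M ⊗[k] C, TensorProduct.map s LinearMap.id (TensorProduct.map β α z)
        = TensorProduct.map (s ∘ₗ β) α z := fun z => by
      rw [← LinearMap.comp_apply, ← TensorProduct.map_comp, LinearMap.id_comp]
    have h3 : TensorProduct.map s s (ΔM (β (g e)))
        = TensorProduct.map (s ∘ₗ β) (s ∘ₗ β) (ΔM (g e)) := by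
      rw [← eβ, ← LinearMap.comp_apply, ← TensorProduct.map_comp]
    rw [h1, h2, h3, ← LinearMap.comp_apply, ← TensorProduct.map_comp, htγ]
    generalize s ∘ₗ β = u
    rw [TensorProduct.map_add_right, TensorProduct.map_add_left, TensorProduct.map_add_left]
    simp only [TensorProduct.map_comp, LinearMap.add_apply, LinearMap.comp_apply,
      ett, egt, egg, etg, map_add, eα, map_neg]
    abel
  have pgt : ∀ e, TensorProduct.map g t (TensorProduct.map γ γ (ΔE e)) =
      TensorProduct.map β α (ρ (g e)) + lTensor M s (ΔM (β (g e))) := fun e => by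
    rw [← LinearMap.comp_apply, ← TensorProduct.map_comp, htγ, hgγ,
      TensorProduct.map_add_right, LinearMap.add_apply, TensorProduct.map_comp,
      LinearMap.comp_apply, egt, TensorProduct.map_comp, LinearMap.comp_apply, egg, ← eβ,
      ← LinearMap.comp_apply (lTensor M s), LinearMap.lTensor, ← TensorProduct.map_comp,
      LinearMap.id_comp]
  have pgg : ∀ e, TensorProduct.map g g (TensorProduct.map γ γ (ΔE e)) =
      ΔM (β (g e)) := fun e => by
    rw [← LinearMap.comp_apply, ← TensorProduct.map_comp, hgγ, TensorProduct.map_comp,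
      LinearMap.comp_apply, egg, eβ]
  have ptg : ∀ e, TensorProduct.map t g (TensorProduct.map γ γ (ΔE e)) =
      -(TensorProduct.comm k M C (TensorProduct.map g t (TensorProduct.map γ γ (ΔE e)))) :=
    fun e => by
      conv_lhs => rw [eanti]
      rw [map_neg, map_neg, TensorProduct.map_comm, TensorProduct.map_comm]
  constructor
  · rintro ⟨H1, H2⟩
    have H1' : ∀ e, TensorProduct.map γ γ (ΔE e) = ΔE (γ e) := LinearMap.congr_fun H1
    have H2' : ∀ e, RE (γ e) = γ (RE e) := LinearMap.congr_fun H2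
    have red : ∀ {X : Type _} [AddCommGroup X] [Module k X] (p q : M →ₗ[k] X),
        (∀ e, p (β (g e)) = q (β (g e))) → p = q := by
      intro X _ _ p q H
      ext m
      obtain ⟨e, he⟩ := surjg (β' m)
      have := H e
      rwa [he, hb1'] at this
    refine ⟨red _ _ fun e => ?_, LinearMap.ext fun m => ?_, LinearMap.ext fun m => ?_⟩
    · have a := ptt e
      rw [H1', ett, eg, et, map_add] at a
      simp only [LinearMap.sub_apply, LinearMap.add_apply, LinearMap.comp_apply, hb2',
        LinearEquiv.coe_coe]
      rw [← sub_eq_zero] at a ⊢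
      rw [← a]; abel
    · obtain ⟨e, he⟩ := surjg (β' m)
      have a := pgt e
      rw [H1', egt, eg, he, hb1'] at a
      simp only [LinearMap.sub_apply, LinearMap.comp_apply]
      rw [a]; abel
    · obtain ⟨e, he⟩ := surjg (β' m)
      have a := etR (γ e)
      rw [H2', et, etR, egR, et, eg, ← eβR, he, hb1', map_add, map_add, eαR] at a
      simp only [LinearMap.sub_apply, LinearMap.comp_apply]
      rw [← sub_eq_zero] at a ⊢
      rw [← neg_eq_zero, ← a]; abel
  · rintro ⟨H1, H2, H3⟩
    have q2 : ∀ e, TensorProduct.map g t (TensorProduct.map γ γ (ΔE e)) =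
        TensorProduct.map g t (ΔE (γ e)) := fun e => by
      have a := LinearMap.congr_fun H2 (β (g e))
      simp only [LinearMap.sub_apply, LinearMap.comp_apply, hb2'] at a
      rw [pgt, egt, eg, ← a]; abel
    constructor
    · refine LinearMap.ext fun e => aux_joint f g t i hi _ _ ?_ (q2 e) ?_ ?_
      · have a := LinearMap.congr_fun H1 (β (g e))
        simp only [LinearMap.sub_apply, LinearMap.add_apply, LinearMap.comp_apply, hb2',
          LinearEquiv.coe_coe] at a
        rw [LinearMap.comp_apply, LinearMap.comp_apply, ptt, ett, eg, et, map_add]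
        rw [← sub_eq_zero] at a ⊢
        rw [← neg_eq_zero, ← a]; abel
      · rw [LinearMap.comp_apply, LinearMap.comp_apply, ptg, q2, egt, etg]
      · rw [LinearMap.comp_apply, LinearMap.comp_apply, pgg, egg, eg]
    · refine LinearMap.ext fun e => ?_
      have a := LinearMap.congr_fun H3 (β (g e))
      simp only [LinearMap.sub_apply, LinearMap.comp_apply, hb2'] at a
      rw [LinearMap.comp_apply, LinearMap.comp_apply]
      rw [← hi (RE (γ e)), ← hi (γ (RE e)), egR, eg, eg, eβR, egR]
      congr 2
      rw [etR, et, et, etR, egR, eg, ← eβR, map_add, map_add, eαR]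
      rw [← sub_eq_zero] at a ⊢
      rw [← a]; abel

theorem stmt16 (lam : k) (ΔC : C →ₗ[k] C ⊗[k] C) (RC : C →ₗ[k] C)
    (ΔM : M →ₗ[k] M ⊗[k] M) (RM : M →ₗ[k] M)
    (ΔE : E →ₗ[k] E ⊗[k] E) (RE : E →ₗ[k] E)
    (hC : IsRBLC lam ΔC RC) (hM : IsRBLC lam ΔM RM) (hE : IsRBLC lam ΔE RE)
    (f : C →ₗ[k] E) (g : E →ₗ[k] M)
    (homf : IsHom ΔC RC ΔE RE f) (homg : IsHom ΔE RE ΔM RM g)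
    (injf : Function.Injective f) (surjg : Function.Surjective g)
    (hexact : LinearMap.range f = LinearMap.ker g)
    (t : E →ₗ[k] C) (ht : t ∘ₗ f = LinearMap.id)
    (h : M →ₗ[k] C ⊗[k] C) (ρ : M →ₗ[k] M ⊗[k] C) (φ : M →ₗ[k] C)
    (hh : h ∘ₗ g = TensorProduct.map t t ∘ₗ ΔE - ΔC ∘ₗ t)
    (hρ : ρ ∘ₗ g = TensorProduct.map g t ∘ₗ ΔE)
    (hφ : φ ∘ₗ g = t ∘ₗ RE - RC ∘ₗ t) :
    -- Exactness at `Aut_C(E)`: the image of the inclusion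
    -- `Aut_C^M(E) → Aut_C(E)` consists exactly of those `γ ∈ Aut_C(E)` with
    -- `K(γ) = (I_C, I_M)`, and the inclusion is injective:
    (∀ γ : E →ₗ[k] E,
        (IsHom ΔE RE ΔE RE γ ∧ Function.Bijective γ ∧
          Submodule.map γ (LinearMap.range f) = LinearMap.range f) →
        ((t ∘ₗ γ ∘ₗ f = LinearMap.id ∧ g ∘ₗ γ = g) ↔
          (IsHom ΔE RE ΔE RE γ ∧ Function.Bijective γ ∧
            Submodule.map γ (LinearMap.range f) = LinearMap.range f ∧
            t ∘ₗ γ ∘ₗ f = LinearMap.id ∧ g ∘ₗ γ = g))) ∧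
    -- Exactness at `Aut(C) × Aut(M)`: a pair `(α, β)` of automorphisms lies in
    -- the image of `K` iff its Wells class vanishes, i.e. iff the twisted
    -- cocycle is equivalent to `(h, ρ, φ)`:
    (∀ (α : C →ₗ[k] C) (β : M →ₗ[k] M),
      IsHom ΔC RC ΔC RC α → Function.Bijective α →
      IsHom ΔM RM ΔM RM β → Function.Bijective β →
      ∀ β' : M →ₗ[k] M, β ∘ₗ β' = LinearMap.id → β' ∘ₗ β = LinearMap.id →
      ((∃ γ : E →ₗ[k] E,
          IsHom ΔE RE ΔE RE γ ∧ Function.Bijective γ ∧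
          Submodule.map γ (LinearMap.range f) = LinearMap.range f ∧
          t ∘ₗ γ ∘ₗ f = α ∧ g ∘ₗ γ = β ∘ₗ g) ↔
        CocEquiv ΔC RC ΔM RM
          (TensorProduct.map α α ∘ₗ h ∘ₗ β')
          (TensorProduct.map β α ∘ₗ ρ ∘ₗ β')
          (α ∘ₗ φ ∘ₗ β')
          h ρ φ)) := by
  have htf : ∀ c, t (f c) = c := fun c => LinearMap.congr_fun ht c
  have hgf : ∀ c, g (f c) = 0 := fun c => by
    have : f c ∈ LinearMap.ker g := hexact ▸ LinearMap.mem_range_self f c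
    exact this
  have hker : ∀ e, g e = 0 → ∃ c, f c = e := fun e he => by
    have : e ∈ LinearMap.range f := by rw [hexact]; exact he
    exact this
  obtain ⟨i, hi0⟩ := aux_factor g surjg (LinearMap.id - f ∘ₗ t) (fun e he => by
    obtain ⟨c, rfl⟩ := hker e he
    simp [htf])
  have hi : ∀ e, f (t e) + i (g e) = e := fun e => by rw [hi0]; simp
  refine ⟨fun γ hγ => ⟨fun hK => ⟨hγ.1, hγ.2.1, hγ.2.2, hK⟩, fun hK => hK.2.2.2⟩, ?_⟩
  intro α β hα bα hβ bβ β' hb1 hb2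
  constructor
  · rintro ⟨γ, hγ, bγ, mγ, hγα, hγβ⟩
    have hγf : ∀ c, t (γ (f c)) = α c := fun c => LinearMap.congr_fun hγα c
    obtain ⟨s', hs'⟩ := aux_factor g surjg (t ∘ₗ γ - α ∘ₗ t) (fun e he => by
      obtain ⟨c, rfl⟩ := hker e he
      simp [htf, hγf])
    refine ⟨s' ∘ₗ β', (aux_key ΔC RC ΔM RM ΔE RE hE.1 f g homg surjg t i hi h ρ φ hh hρ hφ
      α β hα hβ β' hb1 hb2 (s' ∘ₗ β') γ hγβ ?_).1 hγ⟩
    ext e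
    have hb := LinearMap.congr_fun hb2 (g e)
    simp only [LinearMap.comp_apply, LinearMap.id_apply] at hb
    simp [hb, hs']
  · rintro ⟨s, hs⟩
    have hti : ∀ m, t (i m) = 0 := fun m => by
      obtain ⟨e, rfl⟩ := surjg m
      rw [hi0]; simp [htf]
    have hgi : ∀ m, g (i m) = m := fun m => by
      obtain ⟨e, rfl⟩ := surjg m
      rw [hi0]; simp [hgf]
    obtain ⟨γ, hγ⟩ : ∃ γ : E →ₗ[k] E,
        ∀ e, γ e = f (α (t e) + s (β (g e))) + i (β (g e)) :=
      ⟨f ∘ₗ (α ∘ₗ t + s ∘ₗ β ∘ₗ g) + i ∘ₗ β ∘ₗ g, fun e => rfl⟩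
    have hγf : ∀ c, γ (f c) = f (α c) := fun c => by rw [hγ]; simp [htf, hgf]
    have hgγ : ∀ e, g (γ e) = β (g e) := fun e => by rw [hγ]; simp [hgf, hgi]
    have htγ : ∀ e, t (γ e) = α (t e) + s (β (g e)) := fun e => by
      rw [hγ, map_add, htf, hti, add_zero]
    refine ⟨γ, (aux_key ΔC RC ΔM RM ΔE RE hE.1 f g homg surjg t i hi h ρ φ hh hρ hφ
      α β hα hβ β' hb1 hb2 s γ (LinearMap.ext hgγ) (LinearMap.ext htγ)).2 hs,
      ⟨?_, ?_⟩, ?_, ?_, LinearMap.ext hgγ⟩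
    · rw [injective_iff_map_eq_zero]
      intro e he
      have h1 : g e = 0 := by
        have := hgγ e
        rw [he, map_zero] at this
        exact bβ.1 (by rw [← this, map_zero])
      obtain ⟨c, rfl⟩ := hker e h1
      rw [hγf] at he
      have h2 : α c = 0 := injf (by rw [he, map_zero])
      have h3 : c = 0 := bα.1 (by rw [h2, map_zero])
      rw [h3, map_zero]
    · intro e
      obtain ⟨m, hm⟩ := bβ.2 (g e)
      obtain ⟨e1, he1⟩ := surjg m
      obtain ⟨c, hc⟩ := hker (e - γ e1) (by rw [map_sub, hgγ, he1, hm, sub_self])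
      obtain ⟨c1, hc1⟩ := bα.2 c
      refine ⟨f c1 + e1, ?_⟩
      rw [map_add, hγf, hc1, hc]; abel
    · apply le_antisymm
      · rintro _ ⟨_, ⟨c, rfl⟩, rfl⟩
        exact ⟨α c, (hγf c).symm⟩
      · rintro _ ⟨c, rfl⟩
        obtain ⟨c1, rfl⟩ := bα.2 c
        exact ⟨f c1, ⟨c1, rfl⟩, hγf c1⟩
    · ext c
      simp [hγf, htf]


end
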